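/- Let 1 < p ≤ 2 and r ≥ 1. Then for all B ∈ M_n(ℂ), the map A ↦ tr[(B* A^p B)^{r/p}] is convex on the positive definite matrices M_n^{++}(ℂ). -/

import Mathlib

open Matrix
open scoped ComplexOrder

/-- Real power of a matrix, defined spectrally for Hermitian matrices (junk value `0` otherwise). -/
noncomputable def mpow {k : ℕ} (A : Matrix (Fin k) (Fin k) ℂ) (p : ℝ) : Matrix (Fin k) (Fin k) ℂ :=
  if hA : A.IsHermitian then
    (hA.eigenvectorUnitary : Matrix (Fin k) (Fin k) ℂ) *
      Matrix.diagonal (fun i => ((hA.eigenvalues i ^ p : ℝ) : ℂ)) *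
      (hA.eigenvectorUnitary : Matrix (Fin k) (Fin k) ℂ)ᴴ
  else 0

/-- A Schwarz map: `Φ(K*K) ≥ Φ(K)*Φ(K)` for all `K`. -/
def IsSchwarz {a b : ℕ} (Φ : Matrix (Fin a) (Fin a) ℂ →ₗ[ℂ] Matrix (Fin b) (Fin b) ℂ) : Prop :=
  ∀ K, (Φ (Kᴴ * K) - (Φ K)ᴴ * Φ K).PosSemidef

/-- A positive map: sends positive semidefinite matrices to positive semidefinite matrices. -/
def IsPositiveMap {a b : ℕ} (Φ : Matrix (Fin a) (Fin a) ℂ →ₗ[ℂ] Matrix (Fin b) (Fin b) ℂ) : Prop :=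
  ∀ X, X.PosSemidef → (Φ X).PosSemidef

/-- `Ψ` is the Hilbert–Schmidt adjoint of `Φ`: `⟨X, Φ Y⟩ = ⟨Ψ X, Y⟩`. -/
def IsHSAdjoint {a b : ℕ} (Φ : Matrix (Fin a) (Fin a) ℂ →ₗ[ℂ] Matrix (Fin b) (Fin b) ℂ)
    (Ψ : Matrix (Fin b) (Fin b) ℂ →ₗ[ℂ] Matrix (Fin a) (Fin a) ℂ) : Prop :=
  ∀ X Y, (Xᴴ * Φ Y).trace = ((Ψ X)ᴴ * Y).trace

noncomputable def SU {n : ℕ} (U : Matrix (Fin n) (Fin n) ℂ) (a : Fin n → ℝ) : Matrix (Fin n) (Fin n) ℂ :=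
  U * Matrix.diagonal (fun i => ((a i : ℝ) : ℂ)) * Uᴴ

def IsU {n : ℕ} (U : Matrix (Fin n) (Fin n) ℂ) : Prop := Uᴴ * U = 1 ∧ U * Uᴴ = 1

theorem SU_herm {n : ℕ} (U : Matrix (Fin n) (Fin n) ℂ) (a : Fin n → ℝ) : (SU U a).IsHermitian := by
  unfold SU
  apply Matrix.isHermitian_mul_mul_conjTranspose
  rw [Matrix.isHermitian_diagonal_iff]
  intro i
  simp [isSelfAdjoint_iff]

theorem eig_IsU {n : ℕ} {A : Matrix (Fin n) (Fin n) ℂ} (hA : A.IsHermitian) :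
    IsU (hA.eigenvectorUnitary : Matrix (Fin n) (Fin n) ℂ) := by
  constructor
  · exact Unitary.coe_star_mul_self hA.eigenvectorUnitary
  · exact Unitary.coe_mul_star_self hA.eigenvectorUnitary

theorem eig_SU {n : ℕ} {A : Matrix (Fin n) (Fin n) ℂ} (hA : A.IsHermitian) :
    A = SU (hA.eigenvectorUnitary : Matrix (Fin n) (Fin n) ℂ) hA.eigenvalues := by
  conv_lhs => rw [hA.spectral_theorem]
  rfl

theorem SU_congr {n : ℕ} {U V : Matrix (Fin n) (Fin n) ℂ} (hU : IsU U) (hV : IsU V)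
    {a b : Fin n → ℝ} (h : SU U a = SU V b) (f : ℝ → ℝ) :
    SU U (fun i => f (a i)) = SU V (fun i => f (b i)) := by
  unfold SU at *
  set C := Vᴴ * U with hC
  have h1 : C * Matrix.diagonal (fun i => ((a i : ℝ) : ℂ)) =
      Matrix.diagonal (fun i => ((b i : ℝ) : ℂ)) * C := by
    have := congrArg (fun M => Vᴴ * M * U) h
    simp only [Matrix.mul_assoc, hU.1, Matrix.mul_one] at this
    rw [← Matrix.mul_assoc Vᴴ V, hV.1, Matrix.one_mul] at this
    rw [hC, Matrix.mul_assoc, this]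
  have h2 : C * Matrix.diagonal (fun i => ((f (a i) : ℝ) : ℂ)) =
      Matrix.diagonal (fun i => ((f (b i) : ℝ) : ℂ)) * C := by
    ext i j
    have := congrFun (congrFun h1 i) j
    simp only [Matrix.mul_diagonal, Matrix.diagonal_mul] at this ⊢
    by_cases hc : C i j = 0
    · simp [hc]
    · have : (a j : ℂ) = b i := by
        rw [mul_comm] at this
        exact mul_right_cancel₀ hc this
      have : a j = b i := by exact_mod_cast this
      rw [this, mul_comm]
  calc U * Matrix.diagonal (fun i => ((f (a i) : ℝ) : ℂ)) * Uᴴ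
      = V * (C * Matrix.diagonal (fun i => ((f (a i) : ℝ) : ℂ))) * Uᴴ := by
        rw [hC]; simp only [← Matrix.mul_assoc, hV.2, Matrix.one_mul]
    _ = _ := by
        rw [h2, hC]; simp only [Matrix.mul_assoc, hU.2, Matrix.mul_one]

theorem mpow_SU {n : ℕ} {U : Matrix (Fin n) (Fin n) ℂ} (hU : IsU U) (a : Fin n → ℝ) (p : ℝ) :
    mpow (SU U a) p = SU U (fun i => a i ^ p) := by
  have hA := SU_herm U a
  unfold mpow
  rw [dif_pos hA]
  exact (SU_congr hU (eig_IsU hA) (eig_SU hA) (fun x => x ^ p)).symm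

theorem SU_mul {n : ℕ} {U : Matrix (Fin n) (Fin n) ℂ} (hU : IsU U) (a b : Fin n → ℝ) :
    SU U a * SU U b = SU U (fun i => a i * b i) := by
  unfold SU
  calc _ = U * Matrix.diagonal (fun i => ((a i : ℝ) : ℂ)) * (Uᴴ * U) *
      Matrix.diagonal (fun i => ((b i : ℝ) : ℂ)) * Uᴴ := by simp only [Matrix.mul_assoc]
    _ = _ := by
      rw [hU.1, Matrix.mul_one, Matrix.mul_assoc U, Matrix.diagonal_mul_diagonal]
      simp

theorem SU_one {n : ℕ} {U : Matrix (Fin n) (Fin n) ℂ} (hU : IsU U) :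
    SU U (fun _ => 1) = 1 := by
  unfold SU
  simp [hU.2]

theorem posdef_data {n : ℕ} {A : Matrix (Fin n) (Fin n) ℂ} (hA : A.PosDef) :
    ∃ U a, IsU U ∧ A = SU U a ∧ ∀ i, 0 < a i :=
  ⟨_, _, eig_IsU hA.1, eig_SU hA.1, hA.eigenvalues_pos⟩

theorem possemidef_data {n : ℕ} {A : Matrix (Fin n) (Fin n) ℂ} (hA : A.PosSemidef) :
    ∃ U a, IsU U ∧ A = SU U a ∧ ∀ i, 0 ≤ a i :=
  ⟨_, _, eig_IsU hA.1, eig_SU hA.1, hA.eigenvalues_nonneg⟩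

theorem SU_possemidef {n : ℕ} (U : Matrix (Fin n) (Fin n) ℂ) {a : Fin n → ℝ}
    (ha : ∀ i, 0 ≤ a i) : (SU U a).PosSemidef := by
  unfold SU
  apply Matrix.PosSemidef.mul_mul_conjTranspose_same
  rw [Matrix.posSemidef_diagonal_iff]
  intro i
  exact_mod_cast ha i

theorem SU_posdef {n : ℕ} {U : Matrix (Fin n) (Fin n) ℂ} (hU : IsU U) {a : Fin n → ℝ}
    (ha : ∀ i, 0 < a i) : (SU U a).PosDef := by
  rw [(SU_possemidef U fun i => (ha i).le).posDef_iff_isUnit]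
  apply IsUnit.of_mul_eq_one (SU U (fun i => (a i)⁻¹))
  rw [SU_mul hU, ← SU_one hU]
  congr 1
  ext i
  exact mul_inv_cancel₀ (ha i).ne'

theorem T2 {n : ℕ} (U V : Matrix (Fin n) (Fin n) ℂ) (f g : Fin n → ℝ)
    (K Y : Matrix (Fin n) (Fin n) ℂ) :
    (SU U f * K * SU V g * Yᴴ).trace =
      ∑ i, ∑ j, (f i : ℂ) * (g j) * ((Uᴴ * K * V) i j * star ((Uᴴ * Y * V) i j)) := by
  have : (SU U f * K * SU V g * Yᴴ).trace =
      (Matrix.diagonal (fun i => ((f i : ℝ) : ℂ)) * (Uᴴ * K * V) *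
        Matrix.diagonal (fun i => ((g i : ℝ) : ℂ)) * (Uᴴ * Y * V)ᴴ).trace := by
    unfold SU
    simp only [Matrix.mul_assoc, Matrix.conjTranspose_mul, Matrix.conjTranspose_conjTranspose]
    rw [Matrix.trace_mul_comm]
    simp only [Matrix.mul_assoc]
  rw [this, Matrix.trace]
  refine Finset.sum_congr rfl fun i _ => ?_
  rw [Matrix.diag_apply, Matrix.mul_apply]
  refine Finset.sum_congr rfl fun j _ => ?_
  rw [Matrix.mul_diagonal, Matrix.diagonal_mul, Matrix.conjTranspose_apply]
  ring

theorem T1 {n : ℕ} (U V : Matrix (Fin n) (Fin n) ℂ) (f g : Fin n → ℝ)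
    (K : Matrix (Fin n) (Fin n) ℂ) :
    (SU U f * K * SU V g * Kᴴ).trace.re =
      ∑ i, ∑ j, f i * g j * Complex.normSq ((Uᴴ * K * V) i j) := by
  rw [T2]
  simp only [Complex.re_sum]
  refine Finset.sum_congr rfl fun i _ => Finset.sum_congr rfl fun j _ => ?_
  rw [← Complex.ofReal_mul, Complex.re_ofReal_mul]
  congr 1
  simp [Complex.mul_conj]

/-- the trace pairing of spectral functions -/
theorem T0 {n : ℕ} (U V : Matrix (Fin n) (Fin n) ℂ) (f g : Fin n → ℝ) :
    (SU U f * SU V g).trace.re =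
      ∑ i, ∑ j, f i * g j * Complex.normSq ((Uᴴ * V) i j) := by
  have := T1 U V f g 1
  simpa using this

theorem tr_left {n : ℕ} {U V : Matrix (Fin n) (Fin n) ℂ} (hV : IsU V) (f : Fin n → ℝ) :
    (SU U f).trace.re = ∑ i, ∑ j, f i * Complex.normSq ((Uᴴ * V) i j) := by
  have := T0 U V f (fun _ => 1)
  rw [SU_one hV] at this
  simpa using this

theorem tr_right {n : ℕ} {U V : Matrix (Fin n) (Fin n) ℂ} (hU : IsU U) (f : Fin n → ℝ) :
    (SU V f).trace.re = ∑ i, ∑ j, f j * Complex.normSq ((Uᴴ * V) i j) := by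
  have := T0 U V (fun _ => 1) f
  rw [SU_one hU] at this
  simpa using this

theorem tr_SU {n : ℕ} {U : Matrix (Fin n) (Fin n) ℂ} (hU : IsU U) (f : Fin n → ℝ) :
    (SU U f).trace.re = ∑ i, f i := by
  unfold SU
  rw [Matrix.mul_assoc, Matrix.trace_mul_comm, Matrix.mul_assoc, hU.1, Matrix.mul_one]
  simp [Matrix.trace]

theorem scalar1 {s x z : ℝ} (hs : 1 ≤ s) (hx : 0 ≤ x) (hz : 0 ≤ z) :
    s * (x * z ^ (s - 1)) ≤ x ^ s + (s - 1) * z ^ s := by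
  have hs0 : 0 < s := by linarith
  have h := Real.geom_mean_le_arith_mean2_weighted (w₁ := 1 / s) (w₂ := (s - 1) / s)
    (p₁ := x ^ s) (p₂ := z ^ s) (by positivity) (div_nonneg (by linarith) hs0.le)
    (by positivity) (by positivity) (by field_simp; ring)
  rw [← Real.rpow_mul hx, ← Real.rpow_mul hz] at h
  rw [show s * (1 / s) = 1 by field_simp, show s * ((s - 1) / s) = s - 1 by field_simp,
    Real.rpow_one] at h
  calc s * (x * z ^ (s - 1)) ≤ s * (1 / s * x ^ s + (s - 1) / s * z ^ s) := by gcongr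
    _ = _ := by field_simp

theorem scalar2 {s p x w : ℝ} (hs0 : 0 < s) (hs : s < 1) (hx : 0 ≤ x) (hw : 0 < w) :
    x ^ s ≤ s * (x * w ^ (1 - p)) + (1 - s) * w ^ (s * (p - 1) / (1 - s)) := by
  have h := Real.geom_mean_le_arith_mean2_weighted (w₁ := s) (w₂ := 1 - s)
    (p₁ := x * w ^ (1 - p)) (p₂ := w ^ (s * (p - 1) / (1 - s))) hs0.le (by linarith)
    (by positivity) (by positivity) (by ring)
  rw [Real.mul_rpow hx (by positivity), ← Real.rpow_mul hw.le, ← Real.rpow_mul hw.le, mul_assoc,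
    ← Real.rpow_add hw] at h
  have h1 : 1 - s ≠ 0 := by linarith
  rwa [show (1 - p) * s + s * (p - 1) / (1 - s) * (1 - s) = 0 by field_simp; ring,
    Real.rpow_zero, mul_one] at h

theorem young1 {n : ℕ} {X Z : Matrix (Fin n) (Fin n) ℂ} (hX : X.PosSemidef) (hZ : Z.PosSemidef)
    {s : ℝ} (hs : 1 ≤ s) :
    s * (X * mpow Z (s - 1)).trace.re ≤ (mpow X s).trace.re + (s - 1) * (mpow Z s).trace.re := by
  obtain ⟨U, x, hU, rfl, hx⟩ := possemidef_data hX
  obtain ⟨V, z, hV, rfl, hz⟩ := possemidef_data hZ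
  rw [mpow_SU hU, mpow_SU hV, mpow_SU hV, T0, tr_left hV, tr_right hU]
  simp only [Finset.mul_sum, ← Finset.sum_add_distrib]
  refine Finset.sum_le_sum fun i _ => Finset.sum_le_sum fun j _ => ?_
  have := mul_le_mul_of_nonneg_right (scalar1 hs (hx i) (hz j))
    (Complex.normSq_nonneg ((Uᴴ * V) i j))
  linarith

theorem young2 {n : ℕ} {X W : Matrix (Fin n) (Fin n) ℂ} (hX : X.PosSemidef) (hW : W.PosDef)
    {s p : ℝ} (hs0 : 0 < s) (hs : s < 1) :
    (mpow X s).trace.re ≤ s * (X * mpow W (1 - p)).trace.re +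
      (1 - s) * (mpow W (s * (p - 1) / (1 - s))).trace.re := by
  obtain ⟨U, x, hU, rfl, hx⟩ := possemidef_data hX
  obtain ⟨V, z, hV, rfl, hz⟩ := posdef_data hW
  rw [mpow_SU hU, mpow_SU hV, mpow_SU hV, T0, tr_left hV, tr_right hU]
  simp only [Finset.mul_sum, ← Finset.sum_add_distrib]
  refine Finset.sum_le_sum fun i _ => Finset.sum_le_sum fun j _ => ?_
  have := mul_le_mul_of_nonneg_right (scalar2 (p := p) hs0 hs (hx i) (hz j))
    (Complex.normSq_nonneg ((Uᴴ * V) i j))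
  linarith

theorem mul_mpow {n : ℕ} {X : Matrix (Fin n) (Fin n) ℂ} (hX : X.PosSemidef) {s : ℝ} (hs : 1 ≤ s) :
    X * mpow X (s - 1) = mpow X s := by
  obtain ⟨U, x, hU, rfl, hx⟩ := possemidef_data hX
  rw [mpow_SU hU, mpow_SU hU, SU_mul hU]
  congr 1
  ext i
  have := Real.rpow_add' (hx i) (y := 1) (z := s - 1) (by linarith)
  rw [Real.rpow_one] at this
  rw [← this]
  congr 1
  ring

theorem mpow_psd {n : ℕ} {X : Matrix (Fin n) (Fin n) ℂ} (hX : X.PosSemidef) (s : ℝ) :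
    (mpow X s).PosSemidef := by
  obtain ⟨U, x, hU, rfl, hx⟩ := possemidef_data hX
  rw [mpow_SU hU]
  exact SU_possemidef U fun i => Real.rpow_nonneg (hx i) _

/-- convex combination -/
noncomputable def cc {n : ℕ} (c : ℝ) (A₁ A₂ : Matrix (Fin n) (Fin n) ℂ) :
    Matrix (Fin n) (Fin n) ℂ := (c : ℂ) • A₁ + ((1 : ℂ) - (c : ℂ)) • A₂

theorem cc_psd {n : ℕ} {c : ℝ} (hc0 : 0 ≤ c) (hc1 : c ≤ 1) {A₁ A₂ : Matrix (Fin n) (Fin n) ℂ}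
    (h1 : A₁.PosSemidef) (h2 : A₂.PosSemidef) : (cc c A₁ A₂).PosSemidef := by
  unfold cc
  refine (h1.smul ?_).add (h2.smul ?_)
  · exact_mod_cast hc0
  · have : (0:ℝ) ≤ 1 - c := by linarith
    exact_mod_cast this

theorem cc_pd {n : ℕ} {c : ℝ} (hc0 : 0 ≤ c) (hc1 : c ≤ 1) {A₁ A₂ : Matrix (Fin n) (Fin n) ℂ}
    (h1 : A₁.PosDef) (h2 : A₂.PosDef) : (cc c A₁ A₂).PosDef := by
  rcases hc0.eq_or_lt with rfl | hc
  · simpa [cc] using h2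
  unfold cc
  refine (h1.smul ?_).add_posSemidef (h2.posSemidef.smul ?_)
  · exact_mod_cast hc
  · have : (0:ℝ) ≤ 1 - c := by linarith
    exact_mod_cast this

theorem cc_tr {n : ℕ} (c : ℝ) (A₁ A₂ L R : Matrix (Fin n) (Fin n) ℂ) :
    (L * cc c A₁ A₂ * R).trace.re = c * (L * A₁ * R).trace.re + (1 - c) * (L * A₂ * R).trace.re := by
  unfold cc
  have : (1 : ℂ) - c = ((1 - c : ℝ) : ℂ) := by push_cast; rfl
  rw [this]
  simp only [Matrix.mul_add, Matrix.add_mul, Matrix.mul_smul, Matrix.smul_mul, Matrix.trace_add,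
    Matrix.trace_smul, smul_eq_mul, Complex.add_re, Complex.re_ofReal_mul]

theorem tr_pow_convex {n : ℕ} {c : ℝ} (hc0 : 0 ≤ c) (hc1 : c ≤ 1)
    {A₁ A₂ : Matrix (Fin n) (Fin n) ℂ}
    (h1 : A₁.PosSemidef) (h2 : A₂.PosSemidef) {m : ℝ} (hm : 1 ≤ m) :
    (mpow (cc c A₁ A₂) m).trace.re ≤ c * (mpow A₁ m).trace.re + (1 - c) * (mpow A₂ m).trace.re := by
  have hA := cc_psd hc0 hc1 h1 h2
  have y1 := young1 h1 hA hm
  have y2 := young1 h2 hA hm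
  have e := cc_tr c A₁ A₂ 1 (mpow (cc c A₁ A₂) (m - 1))
  simp only [Matrix.one_mul] at e
  rw [mul_mpow hA hm] at e
  have := mul_le_mul_of_nonneg_left y1 hc0
  have := mul_le_mul_of_nonneg_left y2 (sub_nonneg.2 hc1)
  nlinarith

noncomputable def LL {n : ℕ} (K Y : Matrix (Fin n) (Fin n) ℂ) (α β : ℝ)
    (A W : Matrix (Fin n) (Fin n) ℂ) : ℝ :=
  2 * (A * K * Yᴴ).trace.re - α * (A * Y * Yᴴ).trace.re - β * (Y * W * Yᴴ).trace.re

theorem LL_cc {n : ℕ} (K Y : Matrix (Fin n) (Fin n) ℂ) (α β c : ℝ)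
    (A₁ A₂ W₁ W₂ : Matrix (Fin n) (Fin n) ℂ) :
    LL K Y α β (cc c A₁ A₂) (cc c W₁ W₂) = c * LL K Y α β A₁ W₁ + (1 - c) * LL K Y α β A₂ W₂ := by
  unfold LL
  have e1 := cc_tr c A₁ A₂ 1 (K * Yᴴ)
  have e2 := cc_tr c A₁ A₂ 1 (Y * Yᴴ)
  simp only [Matrix.one_mul, ← Matrix.mul_assoc] at e1 e2
  rw [e1, e2, cc_tr]
  ring

theorem LL_SU {n : ℕ} (K Y : Matrix (Fin n) (Fin n) ℂ) (α β : ℝ)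
    {U V : Matrix (Fin n) (Fin n) ℂ} (hU : IsU U) (hV : IsU V) (a w : Fin n → ℝ) :
    LL K Y α β (SU U a) (SU V w) = ∑ i, ∑ j,
      (2 * (a i * ((Uᴴ * K * V) i j * star ((Uᴴ * Y * V) i j)).re) -
        (α * a i + β * w j) * Complex.normSq ((Uᴴ * Y * V) i j)) := by
  unfold LL
  have e1 := T2 U V a (fun _ => 1) K Y
  have e2 := T1 U V a (fun _ => 1) Y
  have e3 := T1 U V (fun _ => 1) w Y
  rw [SU_one hV, Matrix.mul_one] at e1 e2
  rw [SU_one hU, Matrix.one_mul] at e3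
  rw [e1, e2, e3]
  simp only [Complex.re_sum, Finset.mul_sum, ← Finset.sum_sub_distrib]
  refine Finset.sum_congr rfl fun i _ => Finset.sum_congr rfl fun j _ => ?_
  rw [← Complex.ofReal_mul, Complex.re_ofReal_mul]
  ring

theorem scalar3 {a d : ℝ} (hd : 0 < d) (k y : ℂ) :
    2 * (a * (k * star y).re) - d * Complex.normSq y ≤ a ^ 2 / d * Complex.normSq k := by
  rw [div_mul_eq_mul_div, le_div_iff₀ hd]
  simp only [Complex.normSq_apply, Complex.mul_re, Complex.star_def, Complex.conj_re,
    Complex.conj_im]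
  nlinarith [sq_nonneg (a * k.re - d * y.re), sq_nonneg (a * k.im - d * y.im)]

theorem Q_convex {n : ℕ} (K : Matrix (Fin n) (Fin n) ℂ) {α β c : ℝ} (hα : 0 ≤ α) (hβ : 0 < β)
    (hc0 : 0 ≤ c) (hc1 : c ≤ 1)
    {U V U₁ V₁ U₂ V₂ : Matrix (Fin n) (Fin n) ℂ} {a w a₁ w₁ a₂ w₂ : Fin n → ℝ}
    (hU : IsU U) (hV : IsU V) (hU₁ : IsU U₁) (hV₁ : IsU V₁) (hU₂ : IsU U₂) (hV₂ : IsU V₂)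
    (ha : ∀ i, 0 < a i) (ha₁ : ∀ i, 0 < a₁ i) (ha₂ : ∀ i, 0 < a₂ i)
    (hw : ∀ i, 0 < w i) (hw₁ : ∀ i, 0 < w₁ i) (hw₂ : ∀ i, 0 < w₂ i)
    (hA : cc c (SU U₁ a₁) (SU U₂ a₂) = SU U a) (hW : cc c (SU V₁ w₁) (SU V₂ w₂) = SU V w) :
    ∑ i, ∑ j, a i ^ 2 / (α * a i + β * w j) * Complex.normSq ((Uᴴ * K * V) i j) ≤
    c * (∑ i, ∑ j, a₁ i ^ 2 / (α * a₁ i + β * w₁ j) * Complex.normSq ((U₁ᴴ * K * V₁) i j)) +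
    (1 - c) *
      (∑ i, ∑ j, a₂ i ^ 2 / (α * a₂ i + β * w₂ j) * Complex.normSq ((U₂ᴴ * K * V₂) i j)) := by
  set y : Matrix (Fin n) (Fin n) ℂ := Matrix.of fun i j =>
    ((a i / (α * a i + β * w j) : ℝ) : ℂ) * (Uᴴ * K * V) i j with hy
  set Y := U * y * Vᴴ with hY
  have hYy : Uᴴ * Y * V = y := by
    rw [hY]
    simp only [Matrix.mul_assoc, hV.1, Matrix.mul_one]
    rw [← Matrix.mul_assoc, hU.1, Matrix.one_mul]
  have key := LL_cc K Y α β c (SU U₁ a₁) (SU U₂ a₂) (SU V₁ w₁) (SU V₂ w₂)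
  rw [hA, hW, LL_SU _ _ _ _ hU hV, LL_SU _ _ _ _ hU₁ hV₁, LL_SU _ _ _ _ hU₂ hV₂] at key
  have pos : ∀ {x z : ℝ}, 0 < x → 0 < z → 0 < α * x + β * z := fun hx hz => by positivity
  have e : ∑ i, ∑ j, a i ^ 2 / (α * a i + β * w j) * Complex.normSq ((Uᴴ * K * V) i j) =
      ∑ i, ∑ j, (2 * (a i * ((Uᴴ * K * V) i j * star ((Uᴴ * Y * V) i j)).re) -
        (α * a i + β * w j) * Complex.normSq ((Uᴴ * Y * V) i j)) := by
    refine Finset.sum_congr rfl fun i _ => Finset.sum_congr rfl fun j _ => ?_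
    have := pos (ha i) (hw j)
    rw [hYy, hy, Matrix.of_apply]
    generalize (Uᴴ * K * V) i j = k
    generalize α * a i + β * w j = d at this ⊢
    simp only [Complex.normSq_apply, Complex.mul_re, Complex.mul_im, Complex.star_def,
      Complex.conj_re, Complex.conj_im, Complex.ofReal_re, Complex.ofReal_im]
    field_simp
    ring
  rw [e, key]
  have : 0 ≤ 1 - c := by linarith
  gcongr with i _ j _ i _ j _
  · exact scalar3 (pos (ha₁ i) (hw₁ j)) _ _
  · exact scalar3 (pos (ha₂ i) (hw₂ j)) _ _

open MeasureTheory Set in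
theorem scalar4 {p : ℝ} (hp : 1 < p) (hp2 : p < 2) : ∃ C : ℝ, 0 ≤ C ∧ ∀ a w : ℝ, 0 < a → 0 < w →
    IntegrableOn (fun t => t ^ (p - 2) * (a ^ 2 / (1 * a + t * w))) (Ioi 0) ∧
    a ^ p * w ^ (1 - p) = C * ∫ t in Ioi 0, t ^ (p - 2) * (a ^ 2 / (1 * a + t * w)) := by
  refine ⟨(∫ t in Ioi 0, Real.rpowIntegrand₀₁ (p - 1) t 1)⁻¹, ?_, ?_⟩
  · exact inv_nonneg.2 (Real.integral_rpowIntegrand₀₁_one_pos ⟨by linarith, by linarith⟩).le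
  intro a w ha hw
  have hx : 0 ≤ a / w := by positivity
  have E : EqOn (fun t => w * Real.rpowIntegrand₁₂ p t (a / w))
      (fun t => t ^ (p - 2) * (a ^ 2 / (1 * a + t * w))) (Ioi 0) := by
    intro t ht
    have ht : 0 < t := ht
    simp only
    rw [Real.rpowIntegrand₁₂_eq_mul_rpowIntegrand₀₁ hx ht,
      Real.rpowIntegrand₀₁_eq_pow_div ⟨by linarith, by linarith⟩ ht.le hx,
      show p - 1 - 1 = p - 2 by ring]
    have : 0 < 1 * a + t * w := by positivity
    have : 0 < t + a / w := by positivity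
    field_simp
    ring
  have hi := (Real.integrableOn_rpowIntegrand₁₂ (p := p) ⟨hp, hp2⟩ hx).const_mul w
  refine ⟨IntegrableOn.congr_fun hi E measurableSet_Ioi, ?_⟩
  rw [← setIntegral_congr_fun measurableSet_Ioi E, integral_const_mul, mul_left_comm,
    ← Real.rpow_eq_const_mul_integral_rpowIntegrand₁₂ ⟨hp, hp2⟩ hx,
    Real.div_rpow ha.le hw.le, Real.rpow_sub hw, Real.rpow_one]
  ring

open MeasureTheory Set in
theorem J_convex {n : ℕ} (K : Matrix (Fin n) (Fin n) ℂ) {p c : ℝ} (hp : 1 < p) (hp2 : p ≤ 2)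
    (hc0 : 0 ≤ c) (hc1 : c ≤ 1) {A₁ A₂ W₁ W₂ : Matrix (Fin n) (Fin n) ℂ}
    (hA₁ : A₁.PosDef) (hA₂ : A₂.PosDef) (hW₁ : W₁.PosDef) (hW₂ : W₂.PosDef) :
    (mpow (cc c A₁ A₂) p * K * mpow (cc c W₁ W₂) (1 - p) * Kᴴ).trace.re ≤
      c * (mpow A₁ p * K * mpow W₁ (1 - p) * Kᴴ).trace.re +
      (1 - c) * (mpow A₂ p * K * mpow W₂ (1 - p) * Kᴴ).trace.re := by
  obtain ⟨U, a, hU, hA, ha⟩ := posdef_data (cc_pd hc0 hc1 hA₁ hA₂)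
  obtain ⟨V, w, hV, hW, hw⟩ := posdef_data (cc_pd hc0 hc1 hW₁ hW₂)
  obtain ⟨U₁, a₁, hU₁, rfl, ha₁⟩ := posdef_data hA₁
  obtain ⟨U₂, a₂, hU₂, rfl, ha₂⟩ := posdef_data hA₂
  obtain ⟨V₁, w₁, hV₁, rfl, hw₁⟩ := posdef_data hW₁
  obtain ⟨V₂, w₂, hV₂, rfl, hw₂⟩ := posdef_data hW₂
  have Q : ∀ {α β : ℝ}, 0 ≤ α → 0 < β → _ := fun {α β} hα hβ =>
    Q_convex K (α := α) (β := β) hα hβ hc0 hc1 hU hV hU₁ hV₁ hU₂ hV₂ ha ha₁ ha₂ hw hw₁ hw₂ hA hW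
  rw [hA, hW, mpow_SU hU, mpow_SU hV, mpow_SU hU₁, mpow_SU hV₁, mpow_SU hU₂, mpow_SU hV₂,
    T1, T1, T1]
  rcases hp2.eq_or_lt with rfl | hp2
  · have e : ∀ (a w : ℝ), a ^ (2:ℝ) * w ^ (1 - 2 : ℝ) = a ^ 2 / (0 * a + 1 * w) := by
      intro a w
      rw [show (1 - 2 : ℝ) = -1 by norm_num, Real.rpow_neg_one, Real.rpow_two]
      simp [div_eq_mul_inv]
    simp only [e]
    exact Q le_rfl one_pos
  obtain ⟨C, hC, hs⟩ := scalar4 hp hp2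
  have I : ∀ (U V : Matrix (Fin n) (Fin n) ℂ) (a w : Fin n → ℝ), (∀ i, 0 < a i) → (∀ i, 0 < w i) →
      IntegrableOn (fun t : ℝ => t ^ (p - 2) * ∑ i, ∑ j, a i ^ 2 / (1 * a i + t * w j) *
        Complex.normSq ((Uᴴ * K * V) i j)) (Ioi 0) ∧
      ∑ i, ∑ j, a i ^ p * w j ^ (1 - p) * Complex.normSq ((Uᴴ * K * V) i j) =
      C * ∫ t in Ioi (0:ℝ), t ^ (p - 2) * ∑ i, ∑ j, a i ^ 2 / (1 * a i + t * w j) *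
        Complex.normSq ((Uᴴ * K * V) i j) := by
    intro U V a w ha hw
    simp only [Finset.mul_sum, ← mul_assoc (_ ^ (p - 2))]
    have h1 : ∀ i j, IntegrableOn (fun t : ℝ => t ^ (p - 2) * (a i ^ 2 / (1 * a i + t * w j)) *
        Complex.normSq ((Uᴴ * K * V) i j)) (Ioi 0) := fun i j =>
      (hs _ _ (ha i) (hw j)).1.mul_const _
    refine ⟨integrable_finsetSum _ fun i _ => integrable_finsetSum _ fun j _ => h1 i j, ?_⟩
    rw [integral_finsetSum _ fun i _ => integrable_finsetSum _ fun j _ => h1 i j, Finset.mul_sum]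
    refine Finset.sum_congr rfl fun i _ => ?_
    rw [integral_finsetSum _ fun j _ => h1 i j, Finset.mul_sum]
    refine Finset.sum_congr rfl fun j _ => ?_
    rw [integral_mul_const, (hs _ _ (ha i) (hw j)).2, mul_assoc]
  obtain ⟨i0, e0⟩ := I U V a w ha hw
  obtain ⟨i1, e1⟩ := I U₁ V₁ a₁ w₁ ha₁ hw₁
  obtain ⟨i2, e2⟩ := I U₂ V₂ a₂ w₂ ha₂ hw₂
  rw [e0, e1, e2, mul_left_comm c, mul_left_comm (1 - c), ← mul_add]
  refine mul_le_mul_of_nonneg_left ?_ hC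
  rw [← integral_const_mul, ← integral_const_mul, ← integral_add (i1.const_mul _) (i2.const_mul _)]
  refine setIntegral_mono_on i0 ((i1.const_mul _).add (i2.const_mul _)) measurableSet_Ioi ?_
  intro t ht
  have ht : 0 < t := ht
  have := mul_le_mul_of_nonneg_left (Q zero_le_one ht) (Real.rpow_nonneg ht.le (p - 2))
  refine this.trans (le_of_eq ?_)
  change _ = _ + _
  ring

theorem case1 {n : ℕ} (p s : ℝ) (hp0 : 1 < p) (hp1 : p ≤ 2) (hs : 1 ≤ s)
    (B : Matrix (Fin n) (Fin n) ℂ)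
    (A₁ A₂ : Matrix (Fin n) (Fin n) ℂ) (hA₁ : A₁.PosDef) (hA₂ : A₂.PosDef)
    (c : ℝ) (hc0 : 0 ≤ c) (hc1 : c ≤ 1) :
    (mpow (Bᴴ * mpow (cc c A₁ A₂) p * B) s).trace.re ≤
      c * (mpow (Bᴴ * mpow A₁ p * B) s).trace.re +
        (1 - c) * (mpow (Bᴴ * mpow A₂ p * B) s).trace.re := by
  have psd : ∀ {A : Matrix (Fin n) (Fin n) ℂ}, A.PosDef → (Bᴴ * mpow A p * B).PosSemidef :=
    fun h => (mpow_psd h.posSemidef p).conjTranspose_mul_mul_same B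
  have h0 := psd (cc_pd hc0 hc1 hA₁ hA₂)
  have h1 := psd hA₁
  have h2 := psd hA₂
  set X := Bᴴ * mpow (cc c A₁ A₂) p * B with hX
  obtain ⟨V, hV⟩ : ∃ V, mpow X (s - 1) = V * Vᴴ := by
    obtain ⟨U, x, hU, e, hx⟩ := possemidef_data (mpow_psd h0 (s - 1))
    refine ⟨SU U fun i => √(x i), ?_⟩
    rw [e, (SU_herm U _).eq, SU_mul hU]
    congr 1
    ext i
    exact (Real.mul_self_sqrt (hx i)).symm
  have one : (1 : Matrix (Fin n) (Fin n) ℂ).PosDef := Matrix.PosDef.one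
  have J := J_convex (B * V) hp0 hp1 hc0 hc1 hA₁ hA₂ one one
  have m1 : mpow (1 : Matrix (Fin n) (Fin n) ℂ) (1 - p) = 1 := by
    have hu : IsU (1 : Matrix (Fin n) (Fin n) ℂ) := by constructor <;> simp
    conv_lhs => rw [← SU_one hu]
    rw [mpow_SU hu]
    simp only [Real.one_rpow]
    exact SU_one hu
  have c1 : cc c (1 : Matrix (Fin n) (Fin n) ℂ) 1 = 1 := by
    unfold cc
    rw [← add_smul]
    simp
  have e : ∀ M, (M * (B * V) * 1 * (B * V)ᴴ).trace.re = ((Bᴴ * M * B) * mpow X (s - 1)).trace.re := by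
    intro M
    rw [hV, Matrix.mul_one, Matrix.conjTranspose_mul]
    simp only [← Matrix.mul_assoc]
    rw [Matrix.trace_mul_comm]
    simp only [← Matrix.mul_assoc]
  rw [c1, m1, e, e, e, ← hX, mul_mpow h0 hs] at J
  have y1 := mul_le_mul_of_nonneg_left (young1 h1 h0 hs) hc0
  have y2 := mul_le_mul_of_nonneg_left (young1 h2 h0 hs) (sub_nonneg.2 hc1)
  have := mul_le_mul_of_nonneg_left J (by linarith : 0 ≤ s)
  linarith

theorem approx {n : ℕ} {p s : ℝ} (hp : 1 < p) (hs0 : 0 < s) (hs : s < 1)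
    {X : Matrix (Fin n) (Fin n) ℂ} (hX : X.PosSemidef) {η : ℝ} (hη : 0 < η) :
    ∃ W : Matrix (Fin n) (Fin n) ℂ, W.PosDef ∧
      s * (X * mpow W (1 - p)).trace.re + (1 - s) * (mpow W (s * (p - 1) / (1 - s))).trace.re ≤
        (mpow X s).trace.re + n * η := by
  obtain ⟨U, x, hU, rfl, hx⟩ := possemidef_data hX
  set δ := η ^ (1 / s) with hδ
  have hδ0 : 0 < δ := by positivity
  have hδs : δ ^ s = η := by
    rw [hδ, ← Real.rpow_mul hη.le]; field_simp; simp
  have hp' : p - 1 ≠ 0 := by linarith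
  have hs' : 1 - s ≠ 0 := by linarith
  refine ⟨SU U fun i => (x i + δ) ^ ((1 - s) / (p - 1)), SU_posdef hU fun i => ?_, ?_⟩
  · have := hx i
    positivity
  rw [mpow_SU hU, mpow_SU hU, mpow_SU hU, SU_mul hU, tr_SU hU, tr_SU hU, tr_SU hU]
  have : (n : ℝ) * η = ∑ _i : Fin n, η := by simp
  rw [this, Finset.mul_sum, Finset.mul_sum, ← Finset.sum_add_distrib, ← Finset.sum_add_distrib]
  refine Finset.sum_le_sum fun i _ => ?_
  have hxi := hx i
  have hpos : 0 < x i + δ := by positivity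
  rw [← Real.rpow_mul hpos.le, ← Real.rpow_mul hpos.le,
    show (1 - s) / (p - 1) * (1 - p) = s - 1 by field_simp; ring,
    show (1 - s) / (p - 1) * (s * (p - 1) / (1 - s)) = s by field_simp]
  have b1 : x i * (x i + δ) ^ (s - 1) ≤ x i ^ s := by
    rcases hxi.eq_or_lt with h | h
    · rw [← h]; simp [Real.zero_rpow hs0.ne']
    · calc x i * (x i + δ) ^ (s - 1) ≤ x i * x i ^ (s - 1) := by
            refine mul_le_mul_of_nonneg_left ?_ hxi
            exact Real.rpow_le_rpow_of_nonpos h (by linarith) (by linarith)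
        _ = x i ^ s := by
            rw [Real.rpow_sub_one h.ne']; field_simp
  have b2 : (x i + δ) ^ s ≤ x i ^ s + η := by
    rw [← hδs]
    exact Real.rpow_add_le_add_rpow hxi hδ0.le hs0.le hs.le
  nlinarith

theorem case2 {n : ℕ} (p s : ℝ) (hp0 : 1 < p) (hp1 : p ≤ 2) (hs0 : 0 < s) (hs : s < 1)
    (hsp : 1 ≤ s * p)
    (B : Matrix (Fin n) (Fin n) ℂ)
    (A₁ A₂ : Matrix (Fin n) (Fin n) ℂ) (hA₁ : A₁.PosDef) (hA₂ : A₂.PosDef)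
    (c : ℝ) (hc0 : 0 ≤ c) (hc1 : c ≤ 1) :
    (mpow (Bᴴ * mpow (cc c A₁ A₂) p * B) s).trace.re ≤
      c * (mpow (Bᴴ * mpow A₁ p * B) s).trace.re +
        (1 - c) * (mpow (Bᴴ * mpow A₂ p * B) s).trace.re := by
  have psd : ∀ {A : Matrix (Fin n) (Fin n) ℂ}, A.PosDef → (Bᴴ * mpow A p * B).PosSemidef :=
    fun h => (mpow_psd h.posSemidef p).conjTranspose_mul_mul_same B
  have h0 := psd (cc_pd hc0 hc1 hA₁ hA₂)
  have h1 := psd hA₁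
  have h2 := psd hA₂
  have hm : 1 ≤ s * (p - 1) / (1 - s) := by
    rw [le_div_iff₀ (by linarith)]; linarith
  have main : ∀ η : ℝ, 0 < η → (mpow (Bᴴ * mpow (cc c A₁ A₂) p * B) s).trace.re ≤
      c * (mpow (Bᴴ * mpow A₁ p * B) s).trace.re +
        (1 - c) * (mpow (Bᴴ * mpow A₂ p * B) s).trace.re + n * η := by
    intro η hη
    obtain ⟨W₁, hW₁, a1⟩ := approx hp0 hs0 hs h1 hη
    obtain ⟨W₂, hW₂, a2⟩ := approx hp0 hs0 hs h2 hη
    have y := young2 (p := p) h0 (cc_pd hc0 hc1 hW₁ hW₂) hs0 hs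
    have t := tr_pow_convex hc0 hc1 hW₁.posSemidef hW₂.posSemidef hm
    have J := J_convex B hp0 hp1 hc0 hc1 hA₁ hA₂ hW₁ hW₂
    have e : ∀ M N : Matrix (Fin n) (Fin n) ℂ,
        (M * B * N * Bᴴ).trace.re = ((Bᴴ * M * B) * N).trace.re := by
      intro M N
      rw [Matrix.trace_mul_comm]
      simp only [← Matrix.mul_assoc]
    rw [e, e, e] at J
    have J' := mul_le_mul_of_nonneg_left J hs0.le
    have t' := mul_le_mul_of_nonneg_left t (sub_nonneg.2 hs.le)
    have a1' := mul_le_mul_of_nonneg_left a1 hc0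
    have a2' := mul_le_mul_of_nonneg_left a2 (sub_nonneg.2 hc1)
    linarith
  refine le_of_forall_pos_le_add fun ε hε => ?_
  refine (main (ε / (n + 1)) (by positivity)).trans ?_
  have : (n : ℝ) * (ε / (n + 1)) ≤ ε := by
    rw [mul_div_assoc', div_le_iff₀ (by positivity)]
    nlinarith
  linarith

theorem stmt19 {n : ℕ} (p r : ℝ) (hp0 : 1 < p) (hp1 : p ≤ 2) (hr : 1 ≤ r)
    (B : Matrix (Fin n) (Fin n) ℂ)
    (A₁ A₂ : Matrix (Fin n) (Fin n) ℂ) (hA₁ : A₁.PosDef) (hA₂ : A₂.PosDef)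
    (c : ℝ) (hc0 : 0 ≤ c) (hc1 : c ≤ 1) :
    (mpow (Bᴴ * mpow ((c : ℂ) • A₁ + ((1 : ℂ) - (c : ℂ)) • A₂) p * B) (r / p)).trace.re ≤
      c * (mpow (Bᴴ * mpow A₁ p * B) (r / p)).trace.re +
        (1 - c) * (mpow (Bᴴ * mpow A₂ p * B) (r / p)).trace.re := by
  have hp : 0 < p := by linarith
  rcases le_or_gt 1 (r / p) with h | h
  · exact case1 p (r / p) hp0 hp1 h B A₁ A₂ hA₁ hA₂ c hc0 hc1
  · refine case2 p (r / p) hp0 hp1 (by positivity) h ?_ B A₁ A₂ hA₁ hA₂ c hc0 hc1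
    rw [div_mul_cancel₀ _ hp.ne']
    exact hr
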